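/- Let A be a unital C*-algebra, (X, ‖·‖_X) a quasi-normed A-bimodule with modulus of concavity C ≥ 1, δ : A → X a derivation, and J := {x ∈ A : the linear map u ↦ δ(xu) from A to X is bounded}. Then the restriction of δ to J is bounded: there exists K ≥ 0 such that ‖δ(x)‖_X ≤ K‖x‖_A for all x ∈ J. -/

import Mathlib

open MulOpposite

/-!
For a derivation, boundedness of `u ↦ δ (x * u)` is the same as boundedness of `u ↦ x • δ u`. The
uniform boundedness principle survives for quasi-norms, so the set `J` of such `x` is a closed
right ideal. If `δ` were unbounded on `J`, there would be a square-summable sequence `xₙ` in `J`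
with `δ xₙ` unbounded. Then `h = ∑ xₙ xₙ⋆` and `b = h ^ (1 / 4)` lie in `J`, and `xₙ xₙ⋆ ≤ b ^ 4`
lets us factor `xₙ = b cₙ` with `cₙ` bounded; but `u ↦ δ (b * u)` is bounded, a contradiction.
-/

open Filter Topology Set

/-- `q` is a quasi-seminorm with modulus of concavity `C`: a quasi-norm without definiteness. -/
structure IsQuasiSeminorm (𝕜 : Type*) {X : Type*} [NormedField 𝕜] [AddCommGroup X] [Module 𝕜 X]
    (C : ℝ) (q : X → ℝ) : Prop where
  one_le : 1 ≤ C
  map_smul : ∀ (α : 𝕜) (x : X), q (α • x) = ‖α‖ * q x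
  map_add_le : ∀ x y : X, q (x + y) ≤ C * (q x + q y)

/-- `p` is bounded by a multiple of the norm. A linear map `T` into a quasi-normed space `(X, q)` is
bounded when `fun u ↦ q (T u)` is norm-dominated. -/
def NormDominated {E : Type*} [Norm E] (p : E → ℝ) : Prop :=
  ∃ K : ℝ, 0 ≤ K ∧ ∀ u, p u ≤ K * ‖u‖

namespace IsQuasiSeminorm

section Basic

variable {𝕜 E X : Type*} [NormedField 𝕜] [AddCommGroup E] [Module 𝕜 E] [AddCommGroup X]
  [Module 𝕜 X] {C : ℝ} {q : X → ℝ}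

theorem modulus_nonneg (hq : IsQuasiSeminorm 𝕜 C q) : 0 ≤ C :=
  zero_le_one.trans hq.one_le

theorem map_zero (hq : IsQuasiSeminorm 𝕜 C q) : q 0 = 0 := by
  simpa using hq.map_smul 0 0

theorem map_neg (hq : IsQuasiSeminorm 𝕜 C q) (x : X) : q (-x) = q x := by
  simpa using hq.map_smul (-1) x

theorem nonneg (hq : IsQuasiSeminorm 𝕜 C q) (x : X) : 0 ≤ q x := by
  have h := hq.map_add_le x (-x)
  rw [add_neg_cancel, hq.map_zero, hq.map_neg] at h
  linarith [nonneg_of_mul_nonneg_right h (zero_lt_one.trans_le hq.one_le)]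

theorem comp (hq : IsQuasiSeminorm 𝕜 C q) (T : E →ₗ[𝕜] X) :
    IsQuasiSeminorm 𝕜 C fun u => q (T u) where
  one_le := hq.one_le
  map_smul α u := by rw [_root_.map_smul, hq.map_smul]
  map_add_le u v := by rw [map_add]; exact hq.map_add_le _ _

theorem normDominated_add {E : Type*} [SeminormedAddCommGroup E] (hq : IsQuasiSeminorm 𝕜 C q)
    {f g : E → X} (hf : NormDominated fun u => q (f u)) (hg : NormDominated fun u => q (g u)) :
    NormDominated fun u => q (f u + g u) := by
  obtain ⟨K, hK, hf⟩ := hf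
  obtain ⟨L, hL, hg⟩ := hg
  have hC := hq.modulus_nonneg
  refine ⟨C * (K + L), by positivity, fun u => ?_⟩
  calc q (f u + g u) ≤ C * (q (f u) + q (g u)) := hq.map_add_le _ _
    _ ≤ C * (K * ‖u‖ + L * ‖u‖) := by gcongr; exacts [hf u, hg u]
    _ = C * (K + L) * ‖u‖ := by ring

end Basic

section UniformBoundedness

variable {𝕜 E : Type*}

/-- A norm-dominated quasi-seminorm need not be continuous, whence the loss of the factor `C`. -/
theorem le_mul_of_mem_closure [NormedField 𝕜] [SeminormedAddCommGroup E] [Module 𝕜 E] {C : ℝ}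
    {p : E → ℝ} (hp : IsQuasiSeminorm 𝕜 C p) (hdom : NormDominated p) {S : Set E} {M : ℝ}
    (hM : ∀ v ∈ S, p v ≤ M) {u : E} (hu : u ∈ closure S) : p u ≤ C * M := by
  obtain ⟨K, -, hK⟩ := hdom
  obtain ⟨v, hvS, hv⟩ := mem_closure_iff_seq_limit.1 hu
  have hlim : Tendsto (fun n => C * (K * ‖u - v n‖ + M)) atTop (𝓝 (C * (K * ‖u - u‖ + M))) :=
    (((tendsto_const_nhds.sub hv).norm.const_mul K).add_const M).const_mul C
  rw [sub_self, norm_zero, mul_zero, zero_add] at hlim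
  refine ge_of_tendsto' hlim fun n => ?_
  calc p u = p (u - v n + v n) := by rw [sub_add_cancel]
    _ ≤ C * (p (u - v n) + p (v n)) := hp.map_add_le _ _
    _ ≤ C * (K * ‖u - v n‖ + M) :=
      mul_le_mul_of_nonneg_left (add_le_add (hK _) (hM _ (hvS n))) hp.modulus_nonneg

theorem le_of_forall_mem_ball [NormedField 𝕜] [SeminormedAddCommGroup E] [Module 𝕜 E] {C : ℝ}
    {p : E → ℝ} (hp : IsQuasiSeminorm 𝕜 C p) {a : E} {ρ M : ℝ} (hM : ∀ v ∈ Metric.ball a ρ, p v ≤ M)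
    {u : E} (hu : ‖u‖ < ρ) : p u ≤ C * (M + M) := by
  have hau : a + u ∈ Metric.ball a ρ := by simpa [dist_eq_norm] using hu
  have ha : a ∈ Metric.ball a ρ := Metric.mem_ball_self ((norm_nonneg u).trans_lt hu)
  calc p u = p (a + u + -a) := by rw [add_neg_cancel_comm]
    _ ≤ C * (p (a + u) + p (-a)) := hp.map_add_le _ _
    _ = C * (p (a + u) + p a) := by rw [hp.map_neg]
    _ ≤ C * (M + M) :=
      mul_le_mul_of_nonneg_left (add_le_add (hM _ hau) (hM _ ha)) hp.modulus_nonneg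

theorem le_mul_norm_of_forall_norm_lt [NormedField 𝕜] [NormedAddCommGroup E] [NormedSpace 𝕜 E]
    {C : ℝ} {p : E → ℝ} (hp : IsQuasiSeminorm 𝕜 C p) {c : 𝕜} (hc : 1 < ‖c‖) {ρ L : ℝ} (hρ : 0 < ρ)
    (hL : ∀ u, ‖u‖ < ρ → p u ≤ L) (u : E) : p u ≤ L * (ρ⁻¹ * ‖c‖) * ‖u‖ := by
  rcases eq_or_ne u 0 with rfl | hu
  · simp [hp.map_zero]
  obtain ⟨d, hd, hdu, -, hdinv⟩ := rescale_to_shell hc hρ hu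
  calc p u = ‖d⁻¹‖ * p (d • u) := by rw [← hp.map_smul, inv_smul_smul₀ hd]
    _ ≤ ρ⁻¹ * ‖c‖ * ‖u‖ * L := by
      rw [norm_inv]
      exact mul_le_mul hdinv (hL _ hdu) (hp.nonneg _) (by positivity)
    _ = L * (ρ⁻¹ * ‖c‖) * ‖u‖ := by ring

theorem banach_steinhaus {ι : Type*} [NontriviallyNormedField 𝕜] [NormedAddCommGroup E]
    [NormedSpace 𝕜 E] [CompleteSpace E] {C : ℝ} {p : ι → E → ℝ}
    (hp : ∀ i, IsQuasiSeminorm 𝕜 C (p i)) (hdom : ∀ i, NormDominated (p i))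
    (hbdd : ∀ u, BddAbove (range fun i => p i u)) :
    ∃ K : ℝ, 0 ≤ K ∧ ∀ i u, p i u ≤ K * ‖u‖ := by
  let S : ℕ → Set E := fun N => {u | ∀ i, p i u ≤ N}
  have hcover : ⋃ N, closure (S N) = univ := by
    refine eq_univ_of_forall fun u => ?_
    obtain ⟨M, hM⟩ := hbdd u
    obtain ⟨N, hN⟩ := exists_nat_ge M
    exact mem_iUnion.2 ⟨N, subset_closure fun i => (hM ⟨i, rfl⟩).trans hN⟩
  obtain ⟨N, a, ha⟩ := nonempty_interior_of_iUnion_of_closed (fun _ => isClosed_closure) hcover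
  obtain ⟨ρ, hρ, hball⟩ := Metric.mem_nhds_iff.1 (mem_interior_iff_mem_nhds.1 ha)
  have hle_ball : ∀ i, ∀ v ∈ Metric.ball a ρ, p i v ≤ C * N := fun i v hv =>
    (hp i).le_mul_of_mem_closure (hdom i) (S := S N) (fun _ hw => hw i) (hball hv)
  let L : ℝ := |C * (C * N + C * N)|
  have hsmall : ∀ i u, ‖u‖ < ρ → p i u ≤ L := fun i u hu =>
    ((hp i).le_of_forall_mem_ball (hle_ball i) hu).trans (le_abs_self _)
  obtain ⟨c, hc⟩ := NormedField.exists_one_lt_norm 𝕜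
  exact ⟨L * (ρ⁻¹ * ‖c‖), by positivity, fun i =>
    (hp i).le_mul_norm_of_forall_norm_lt hc hρ (hsmall i)⟩

theorem isClosed_setOf_normDominated {F X : Type*} [NontriviallyNormedField 𝕜]
    [SeminormedAddCommGroup E] [Module 𝕜 E] [NormedAddCommGroup F] [NormedSpace 𝕜 F]
    [CompleteSpace F] [AddCommGroup X] [Module 𝕜 X] {C : ℝ} {q : X → ℝ}
    (hq : IsQuasiSeminorm 𝕜 C q) (B : E →ₗ[𝕜] F →ₗ[𝕜] X)
    (hB : ∀ u, NormDominated fun x => q (B x u)) :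
    IsClosed {x | NormDominated fun u => q (B x u)} := by
  refine isClosed_of_closure_subset fun x hx => ?_
  obtain ⟨y, hy, hyx⟩ := mem_closure_iff_seq_limit.1 hx
  have hbdd : ∀ u, BddAbove (range fun n => q (B (y n) u)) := fun u => by
    obtain ⟨R, hR⟩ := hyx.norm.bddAbove_range
    obtain ⟨K, hK, hBu⟩ := hB u
    refine ⟨K * R, forall_mem_range.2 fun n => (hBu (y n)).trans ?_⟩
    exact mul_le_mul_of_nonneg_left (hR ⟨n, rfl⟩) hK
  obtain ⟨K, hK, hunif⟩ := banach_steinhaus (fun n => hq.comp (B (y n))) hy hbdd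
  refine ⟨C * K, mul_nonneg hq.modulus_nonneg hK, fun u => ?_⟩
  rw [mul_assoc]
  exact (hq.comp (B.flip u)).le_mul_of_mem_closure (hB u)
    (forall_mem_range.2 fun n => hunif n u)
    (mem_closure_of_tendsto hyx (Eventually.of_forall mem_range_self))

end UniformBoundedness

section Sequences

variable {𝕜 E : Type*} [RCLike 𝕜] [NormedAddCommGroup E] [NormedSpace 𝕜 E] {C : ℝ} {p : E → ℝ}

theorem exists_norm_eq_and_lt (hp : IsQuasiSeminorm 𝕜 C p) (hdom : ¬ NormDominated p) {r : ℝ}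
    (hr : 0 < r) (M : ℝ) : ∃ x, ‖x‖ = r ∧ M < p x := by
  simp only [NormDominated, not_exists, not_and, not_forall, not_le] at hdom
  obtain ⟨u, hu⟩ := hdom (|M| / r) (by positivity)
  have hu0 : u ≠ 0 := by
    rintro rfl
    simp [hp.map_zero] at hu
  have hpos : 0 < ‖u‖ := norm_pos_iff.2 hu0
  have ht : ‖((r / ‖u‖ : ℝ) : 𝕜)‖ = r / ‖u‖ := RCLike.norm_of_nonneg (by positivity)
  refine ⟨((r / ‖u‖ : ℝ) : 𝕜) • u, ?_, ?_⟩
  · rw [norm_smul, ht, div_mul_cancel₀ _ hpos.ne']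
  · calc M ≤ |M| := le_abs_self M
      _ = r / ‖u‖ * (|M| / r * ‖u‖) := by field_simp
      _ < r / ‖u‖ * p u := mul_lt_mul_of_pos_left hu (by positivity)
      _ = p (((r / ‖u‖ : ℝ) : 𝕜) • u) := by rw [hp.map_smul, ht]

theorem normDominated_of_forall_summable (hp : IsQuasiSeminorm 𝕜 C p)
    (h : ∀ x : ℕ → E, (Summable fun n => ‖x n‖ ^ 2) → BddAbove (range fun n => p (x n))) :
    NormDominated p := by
  by_contra hdom
  choose x hxnorm hxlt using fun n : ℕ =>
    hp.exists_norm_eq_and_lt hdom (pow_pos (one_half_pos (α := ℝ)) n) n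
  have hsummable : Summable fun n => ‖x n‖ ^ 2 := by
    simp only [hxnorm, ← pow_mul, mul_comm _ 2]
    simp only [pow_mul]
    exact summable_geometric_of_lt_one (by norm_num) (by norm_num)
  obtain ⟨M, hM⟩ := h x hsummable
  obtain ⟨n, hn⟩ := exists_nat_ge M
  exact ((hxlt n).trans_le (hM ⟨n, rfl⟩)).not_ge hn

end Sequences

end IsQuasiSeminorm

section Factorization

variable {A : Type*} [CStarAlgebra A]

/-- The regularized inverse `(b + ε)⁻¹` of a positive element `b`, for `ε > 0`, given by the
functional calculus; the factorization arguments let `ε` tend to `0` from the right. -/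
noncomputable def shiftedInv (b : A) (ε : ℝ) : A :=
  cfc (fun t : ℝ => (t + ε)⁻¹) b

theorem commute_shiftedInv {b : A} (hb : IsSelfAdjoint b) (ε : ℝ) : Commute b (shiftedInv b ε) := by
  simpa only [cfc_id' ℝ b, shiftedInv] using
    cfc_commute_cfc (fun t : ℝ => t) (fun t : ℝ => (t + ε)⁻¹) b

section Order

variable [PartialOrder A] [StarOrderedRing A]

theorem continuousOn_inv_add_spectrum {b : A} (hb : 0 ≤ b) {ε : ℝ} (hε : 0 < ε) :
    ContinuousOn (fun t : ℝ => (t + ε)⁻¹) (spectrum ℝ b) :=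
  ContinuousOn.inv₀ (by fun_prop) fun _ ht =>
    (add_pos_of_nonneg_of_pos (spectrum_nonneg_of_nonneg hb ht) hε).ne'

theorem mul_shiftedInv_add_smul {b : A} (hb : 0 ≤ b) {ε : ℝ} (hε : 0 < ε) :
    b * shiftedInv b ε + ε • shiftedInv b ε = 1 := by
  have hcont := continuousOn_inv_add_spectrum hb hε
  calc b * shiftedInv b ε + ε • shiftedInv b ε
      = cfc (fun t : ℝ => t * (t + ε)⁻¹ + ε * (t + ε)⁻¹) b := by
        rw [cfc_add (a := b) (fun t : ℝ => t * (t + ε)⁻¹) (fun t : ℝ => ε * (t + ε)⁻¹)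
          (by fun_prop) (by fun_prop), cfc_mul (fun t : ℝ => t) (fun t : ℝ => (t + ε)⁻¹) b,
          cfc_id' ℝ b, cfc_const_mul ε (fun t : ℝ => (t + ε)⁻¹) b, shiftedInv]
    _ = cfc (1 : ℝ → ℝ) b := cfc_congr fun t ht => by
        have := spectrum_nonneg_of_nonneg hb ht
        simp only [Pi.one_apply]
        field_simp
    _ = 1 := cfc_one ℝ b

theorem norm_shiftedInv_mul_sq_sub_le {b : A} (hb : 0 ≤ b) {ε : ℝ} (hε : 0 < ε) :
    ‖shiftedInv b ε * b ^ 2 - b‖ ≤ ε := by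
  have hcont := continuousOn_inv_add_spectrum hb hε
  have hcfc : shiftedInv b ε * b ^ 2 - b = cfc (fun t : ℝ => (t + ε)⁻¹ * t ^ 2 - t) b := by
    rw [cfc_sub (a := b) (fun t : ℝ => (t + ε)⁻¹ * t ^ 2) (fun t : ℝ => t)
      (by fun_prop) (by fun_prop), cfc_mul (fun t : ℝ => (t + ε)⁻¹) (fun t : ℝ => t ^ 2) b,
      cfc_pow (fun t : ℝ => t) 2 b, cfc_id' ℝ b, shiftedInv]
  rw [hcfc]
  refine norm_cfc_le hε.le fun t ht => ?_
  have ht0 : 0 ≤ t := spectrum_nonneg_of_nonneg hb ht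
  calc ‖(t + ε)⁻¹ * t ^ 2 - t‖ = ‖-(ε * (t / (t + ε)))‖ := by congr 1; field_simp; ring
    _ = ε * (t / (t + ε)) := by rw [norm_neg, Real.norm_of_nonneg (by positivity)]
    _ ≤ ε := mul_le_of_le_one_right hε.le (div_le_one_of_le₀ (by linarith) (by positivity))

theorem tendsto_shiftedInv_mul_sq {b : A} (hb : 0 ≤ b) :
    Tendsto (fun ε => shiftedInv b ε * b ^ 2) (𝓝[>] 0) (𝓝 b) := by
  rw [tendsto_iff_norm_sub_tendsto_zero]
  refine squeeze_zero' (Eventually.of_forall fun _ => norm_nonneg _) ?_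
    (tendsto_id.mono_left nhdsWithin_le_nhds)
  exact eventually_mem_nhdsWithin.mono fun ε hε => norm_shiftedInv_mul_sq_sub_le hb hε

theorem norm_mul_le_norm_mul_of_mul_star_le {A : Type*} [NonUnitalCStarAlgebra A] [PartialOrder A]
    [StarOrderedRing A] {x y : A} (h : x * star x ≤ y * star y) (d : A) :
    ‖d * x‖ ≤ ‖d * y‖ := by
  have hconj : d * x * star (d * x) ≤ d * y * star (d * y) := by
    simpa only [star_mul, mul_assoc] using star_right_conjugate_le_conjugate h d
  have hnorm := CStarAlgebra.norm_le_norm_of_nonneg_of_le (mul_star_self_nonneg _) hconj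
  rw [CStarRing.norm_self_mul_star, CStarRing.norm_self_mul_star] at hnorm
  exact (mul_self_le_mul_self_iff (norm_nonneg _) (norm_nonneg _)).2 hnorm

/-- The factor `c` is the limit of `(b + ε)⁻¹ * x`, which converges because `(b + ε)⁻¹ * b ^ 2`
does. -/
theorem exists_eq_mul_of_mul_star_le_pow_four {b x : A} (hb : 0 ≤ b)
    (h : x * star x ≤ b ^ 4) : ∃ c : A, x = b * c ∧ ‖c‖ ≤ ‖b‖ := by
  have hsq : x * star x ≤ b ^ 2 * star (b ^ 2) := by
    rwa [((IsSelfAdjoint.of_nonneg hb).pow 2).star_eq, ← pow_add]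
  have hlim := tendsto_shiftedInv_mul_sq hb
  have hcauchy : Cauchy (map (fun ε => shiftedInv b ε * x) (𝓝[>] 0)) := by
    have hdist := tendsto_uniformity_iff_dist_tendsto_zero.1 (cauchy_map_iff'.1 hlim.cauchy_map)
    refine cauchy_map_iff'.2 (tendsto_uniformity_iff_dist_tendsto_zero.2 ?_)
    refine squeeze_zero (fun _ => dist_nonneg) (fun ε => ?_) hdist
    simp only [dist_eq_norm, ← sub_mul]
    exact norm_mul_le_norm_mul_of_mul_star_le hsq _
  obtain ⟨c, hc⟩ := cauchy_map_iff_exists_tendsto.1 hcauchy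
  refine ⟨c, ?_, le_of_tendsto_of_tendsto' hc.norm hlim.norm fun ε =>
    norm_mul_le_norm_mul_of_mul_star_le hsq _⟩
  have hlim_mul : Tendsto (fun ε : ℝ => b * (shiftedInv b ε * x) + ε • (shiftedInv b ε * x))
      (𝓝[>] 0) (𝓝 (b * c + (0 : ℝ) • c)) :=
    (hc.const_mul b).add ((tendsto_id.mono_left nhdsWithin_le_nhds).smul hc)
  rw [zero_smul, add_zero] at hlim_mul
  refine tendsto_nhds_unique (tendsto_const_nhds.congr' ?_) hlim_mul
  filter_upwards [eventually_mem_nhdsWithin] with ε hε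
  rw [← mul_assoc, ← smul_mul_assoc, ← add_mul, mul_shiftedInv_add_smul hb hε, one_mul]

theorem mem_of_sq_mem_of_isClosed {I : Submodule Aᵐᵒᵖ A} (hI : IsClosed (I : Set A)) {b : A}
    (hb : 0 ≤ b) (h : b ^ 2 ∈ I) : b ∈ I := by
  refine hI.mem_of_tendsto (tendsto_shiftedInv_mul_sq hb) (Eventually.of_forall fun ε => ?_)
  rw [← ((commute_shiftedInv (.of_nonneg hb) ε).pow_left 2).eq]
  exact I.smul_mem (op (shiftedInv b ε)) h

end Order

theorem exists_common_left_factor {I : Submodule Aᵐᵒᵖ A} (hI : IsClosed (I : Set A)) {x : ℕ → A}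
    (hx : ∀ n, x n ∈ I) (hsq : Summable fun n => ‖x n‖ ^ 2) :
    ∃ b ∈ I, ∃ c : ℕ → A, ∀ n, x n = b * c n ∧ ‖c n‖ ≤ ‖b‖ := by
  let _ := CStarAlgebra.spectralOrder A
  let _ := CStarAlgebra.spectralOrderedRing A
  have hsum : Summable fun n => x n * star (x n) :=
    .of_norm (by simpa only [CStarRing.norm_self_mul_star, sq] using hsq)
  let h : A := ∑' n, x n * star (x n)
  have hle : ∀ n, x n * star (x n) ≤ h := fun n => hsum.le_tsum n fun _ _ => mul_star_self_nonneg _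
  have hpos : 0 ≤ h := tsum_nonneg fun _ => mul_star_self_nonneg _
  have hmem : h ∈ I := hI.mem_of_tendsto hsum.hasSum
    (Eventually.of_forall fun s => I.sum_mem fun n _ => I.smul_mem (op (star (x n))) (hx n))
  let s : A := CFC.sqrt h
  have hs : 0 ≤ s := CFC.sqrt_nonneg h
  have hs_sq : s ^ 2 = h := CFC.sq_sqrt h
  let b : A := CFC.sqrt s
  have hb : 0 ≤ b := CFC.sqrt_nonneg s
  have hb_sq : b ^ 2 = s := CFC.sq_sqrt s
  have hb_four : b ^ 4 = h := by rw [← hs_sq, ← hb_sq, ← pow_mul]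
  have hsI : s ∈ I := mem_of_sq_mem_of_isClosed hI hs (hs_sq ▸ hmem)
  have hbI : b ∈ I := mem_of_sq_mem_of_isClosed hI hb (hb_sq ▸ hsI)
  choose c hc using fun n => exists_eq_mul_of_mul_star_le_pow_four hb (hb_four ▸ hle n)
  exact ⟨b, hbI, c, hc⟩

end Factorization

namespace IsQuasiSeminorm

/-- The continuity ideal of a quasi-seminorm `p` on a normed algebra: the right ideal, encoded as
an `Aᵐᵒᵖ`-submodule, of those `x` for which `u ↦ p (x * u)` is norm-dominated. The set `J` of a
derivation `δ` is the continuity ideal of `fun u ↦ q (δ u)`. -/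
def continuityIdeal {𝕜 A : Type*} [NormedField 𝕜] [NormedRing A] [Module 𝕜 A] {C : ℝ}
    {p : A → ℝ} (hp : IsQuasiSeminorm 𝕜 C p) : Submodule Aᵐᵒᵖ A where
  carrier := {x | NormDominated fun u => p (x * u)}
  zero_mem' := ⟨0, le_rfl, fun u => by simp [hp.map_zero]⟩
  add_mem' {x y} hx hy := by
    simpa only [mem_ofPred_eq, add_mul] using hp.normDominated_add hx hy
  smul_mem' := by
    rintro a x ⟨K, hK, hx⟩
    refine ⟨K * ‖a.unop‖, by positivity, fun u => ?_⟩
    calc p (x * a.unop * u) = p (x * (a.unop * u)) := by rw [mul_assoc]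
      _ ≤ K * ‖a.unop * u‖ := hx _
      _ ≤ K * ‖a.unop‖ * ‖u‖ := by rw [mul_assoc]; gcongr; exact norm_mul_le _ _

theorem normDominated_restrict_of_isClosed {A : Type*} [CStarAlgebra A] {C : ℝ} {p : A → ℝ}
    (hp : IsQuasiSeminorm ℂ C p) {I : Submodule Aᵐᵒᵖ A} (hI : IsClosed (I : Set A))
    (hle : I ≤ hp.continuityIdeal) : NormDominated fun x : I => p x := by
  have hpI : IsQuasiSeminorm ℂ C fun x : I => p x := hp.comp (I.restrictScalars ℂ).subtype
  refine hpI.normDominated_of_forall_summable fun x hx => ?_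
  obtain ⟨b, hbI, c, hbc⟩ := exists_common_left_factor hI (fun n => (x n).2) hx
  obtain ⟨K, hK, hb⟩ := hle hbI
  refine ⟨K * ‖b‖, forall_mem_range.2 fun n => ?_⟩
  calc p (x n) = p (b * c n) := by rw [← (hbc n).1]
    _ ≤ K * ‖c n‖ := hb _
    _ ≤ K * ‖b‖ := mul_le_mul_of_nonneg_left (hbc n).2 hK

end IsQuasiSeminorm

section Bimodule

variable {A X : Type*} [NormedRing A] [AddCommMonoid X] [Module A X] [Module Aᵐᵒᵖ X] {q : X → ℝ}

theorem normDominated_smul_of_smul_op_smul_le {y : X} (hy : 0 ≤ q y)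
    (h : ∀ a b : A, q (a • op b • y) ≤ ‖a‖ * ‖b‖ * q y) :
    NormDominated fun a : A => q (a • y) := by
  refine ⟨‖(1 : A)‖ * q y, by positivity, fun a => ?_⟩
  calc q (a • y) = q (a • op (1 : A) • y) := by rw [op_one, one_smul]
    _ ≤ ‖a‖ * ‖(1 : A)‖ * q y := h a 1
    _ = ‖(1 : A)‖ * q y * ‖a‖ := by ring

theorem normDominated_op_smul_of_smul_op_smul_le {y : X} (hy : 0 ≤ q y)
    (h : ∀ a b : A, q (a • op b • y) ≤ ‖a‖ * ‖b‖ * q y) :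
    NormDominated fun b : A => q (op b • y) := by
  refine ⟨‖(1 : A)‖ * q y, by positivity, fun b => ?_⟩
  calc q (op b • y) = q ((1 : A) • op b • y) := by rw [one_smul]
    _ ≤ ‖(1 : A)‖ * ‖b‖ * q y := h 1 b
    _ = ‖(1 : A)‖ * q y * ‖b‖ := by ring

end Bimodule

section Derivation

variable {𝕜 A X : Type*} [NormedRing A] [AddCommGroup X] [Module A X] [Module Aᵐᵒᵖ X] {C : ℝ}
  {q : X → ℝ} {δ : A → X}

theorem IsQuasiSeminorm.normDominated_derivation_mul_iff [NormedField 𝕜] [Module 𝕜 X]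
    (hq : IsQuasiSeminorm 𝕜 C q) (hright : ∀ y : X, NormDominated fun a : A => q (op a • y))
    (hδ : ∀ a b : A, δ (a * b) = op b • δ a + a • δ b) (x : A) :
    (NormDominated fun u => q (δ (x * u))) ↔ NormDominated fun u => q (x • δ u) := by
  constructor <;> intro h
  · have hneg : NormDominated fun u : A => q (-(op u • δ x)) := by
      simpa only [hq.map_neg] using hright (δ x)
    simpa only [hδ, add_neg_cancel_comm] using hq.normDominated_add h hneg
  · simpa only [hδ] using hq.normDominated_add (hright (δ x)) h

theorem IsQuasiSeminorm.isClosed_continuityIdeal_derivation [NontriviallyNormedField 𝕜]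
    [NormedAlgebra 𝕜 A] [CompleteSpace A] [Module 𝕜 X] [IsScalarTower 𝕜 A X]
    (hq : IsQuasiSeminorm 𝕜 C q) (hleft : ∀ y : X, NormDominated fun a : A => q (a • y))
    (hright : ∀ y : X, NormDominated fun a : A => q (op a • y)) (δ : A →ₗ[𝕜] X)
    (hδ : ∀ a b : A, δ (a * b) = op b • δ a + a • δ b) :
    IsClosed ((hq.comp δ).continuityIdeal : Set A) := by
  let B : A →ₗ[𝕜] A →ₗ[𝕜] X := (Algebra.lsmul 𝕜 𝕜 X).toLinearMap.compl₂ δ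
  convert hq.isClosed_setOf_normDominated B fun u => hleft (δ u) using 1
  exact ext (hq.normDominated_derivation_mul_iff hright hδ)

end Derivation

theorem derivation_bounded_on_continuity_ideal_general
    {A X : Type*} [CStarAlgebra A] [AddCommGroup X] [Module ℂ X]
    [Module A X] [Module Aᵐᵒᵖ X] [IsScalarTower ℂ A X] {q : X → ℝ} {C : ℝ}
    (hq : IsQuasiSeminorm ℂ C q) (hleft : ∀ y : X, NormDominated fun a : A => q (a • y))
    (hright : ∀ y : X, NormDominated fun a : A => q (op a • y)) (δ : A →ₗ[ℂ] X)
    (hδ : ∀ a b : A, δ (a * b) = op b • δ a + a • δ b) :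
    ∃ K : ℝ, 0 ≤ K ∧ ∀ x : A, (NormDominated fun u => q (δ (x * u))) → q (δ x) ≤ K * ‖x‖ := by
  have hclosed := hq.isClosed_continuityIdeal_derivation hleft hright δ hδ
  obtain ⟨K, hK, hbound⟩ := (hq.comp δ).normDominated_restrict_of_isClosed hclosed le_rfl
  exact ⟨K, hK, fun x hx => hbound ⟨x, hx⟩⟩

theorem derivation_bounded_on_continuity_ideal
    (A X : Type*) [NormedRing A] [StarRing A] [CStarRing A]
    [NormedAlgebra ℂ A] [CompleteSpace A] [StarModule ℂ A]
    [AddCommGroup X] [Module ℂ X]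
    [Module A X] [Module Aᵐᵒᵖ X] [SMulCommClass A Aᵐᵒᵖ X]
    [IsScalarTower ℂ A X] [IsScalarTower ℂ Aᵐᵒᵖ X]
    (q : X → ℝ) (C : ℝ) (hC : 1 ≤ C)
    (hq_nonneg : ∀ x : X, 0 ≤ q x)
    (hq_def : ∀ x : X, q x = 0 ↔ x = 0)
    (hq_smul : ∀ (α : ℂ) (x : X), q (α • x) = ‖α‖ * q x)
    (hq_add : ∀ x y : X, q (x + y) ≤ C * (q x + q y))
    (hq_mod : ∀ (a b : A) (x : X), q (a • (op b • x)) ≤ ‖a‖ * ‖b‖ * q x)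
    (δ : A →ₗ[ℂ] X)
    (hδ : ∀ a b : A, δ (a * b) = op b • δ a + a • δ b)
    (J : Set A)
    (hJ : J = {x : A | ∃ K : ℝ, 0 ≤ K ∧ ∀ u : A, q (δ (x * u)) ≤ K * ‖u‖}) :
    ∃ K : ℝ, 0 ≤ K ∧ ∀ x ∈ J, q (δ x) ≤ K * ‖x‖ := by
  let _ : CStarAlgebra A := {}
  rw [hJ]
  exact derivation_bounded_on_continuity_ideal_general ⟨hC, hq_smul, hq_add⟩
    (fun y => normDominated_smul_of_smul_op_smul_le (hq_nonneg y) (hq_mod · · y))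
    (fun y => normDominated_op_smul_of_smul_op_smul_le (hq_nonneg y) (hq_mod · · y)) δ hδ
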